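/- arXiv:1302.1149 — 2 statements merged into one kernel-verified Lean document; each statement's English description precedes it below -/
import Mathlib

section
/- Let χ : L → M be an injective morphism of differential graded Lie algebras over a field K of characteristic 0 such that the induced map H^*(L) → H^*(M) is injective. Then the homotopy fibre TW(χ) = { (l, m(t,dt)) ∈ L × M[t,dt] : m(0,0) = 0, m(1,0) = χ(l) } is a homotopy abelian DGLA. -/
/-!
Basic homotopical algebra of differential graded Lie algebras over a field of
characteristic zero, following [Iacono, "Deformations and obstructions of pairs (X,D)"].

A differential graded Lie algebra (DGLA) is encoded as a `K`-module together with an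
internal `ℤ`-grading (a family of submodules whose direct sum is the whole module),
a differential of degree `+1` squaring to zero, and a bracket which is graded
skew-symmetric, satisfies the graded Jacobi identity and the graded Leibniz rule.
-/

universe u v w

/-- A `ℤ`-graded cochain complex structure on a `K`-module `V`: an internal grading
together with a differential of degree `+1` squaring to zero. -/
structure CochainStruct (K : Type u) [Field K] (V : Type v) [AddCommGroup V] [Module K V] :
    Type (max u v) where
  grading : ℤ → Submodule K V
  isInternal : DirectSum.IsInternal grading
  d : V →ₗ[K] V
  d_degree : ∀ i : ℤ, ∀ x ∈ grading i, d x ∈ grading (i + 1)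
  d_sq : ∀ x : V, d (d x) = 0

namespace CochainStruct

variable {K : Type u} [Field K] {V : Type v} [AddCommGroup V] [Module K V]
  {W : Type w} [AddCommGroup W] [Module K W]

/-- Degree `i` cocycles. -/
def cocycles (c : CochainStruct K V) (i : ℤ) : Submodule K V :=
  c.grading i ⊓ LinearMap.ker c.d

/-- Degree `i` coboundaries, as a submodule of the degree `i` cocycles. -/
def coboundaries (c : CochainStruct K V) (i : ℤ) : Submodule K (c.cocycles i) :=
  Submodule.comap (c.cocycles i).subtype (c.grading i ⊓ LinearMap.range c.d)

/-- The degree `i` cohomology of a graded cochain complex. -/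
def cohomology (c : CochainStruct K V) (i : ℤ) : Type v :=
  c.cocycles i ⧸ c.coboundaries i

instance (c : CochainStruct K V) (i : ℤ) : AddCommGroup (c.cohomology i) :=
  inferInstanceAs (AddCommGroup (c.cocycles i ⧸ c.coboundaries i))

instance (c : CochainStruct K V) (i : ℤ) : Module K (c.cohomology i) :=
  inferInstanceAs (Module K (c.cocycles i ⧸ c.coboundaries i))

end CochainStruct

/-- A (degree zero) morphism of graded cochain complexes. -/
structure CochainMap {K : Type u} [Field K] {V : Type v} {W : Type w}
    [AddCommGroup V] [Module K V] [AddCommGroup W] [Module K W]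
    (c : CochainStruct K V) (c' : CochainStruct K W) : Type (max u v w) where
  toFun : V →ₗ[K] W
  map_grading : ∀ i : ℤ, ∀ x ∈ c.grading i, toFun x ∈ c'.grading i
  map_d : ∀ x : V, toFun (c.d x) = c'.d (toFun x)

namespace CochainMap

variable {K : Type u} [Field K] {V : Type v} {W : Type w}
  [AddCommGroup V] [Module K V] [AddCommGroup W] [Module K W]
  {c : CochainStruct K V} {c' : CochainStruct K W}

/-- The induced map on cocycles. -/
def cocyclesMap (f : CochainMap c c') (i : ℤ) : c.cocycles i →ₗ[K] c'.cocycles i :=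
  f.toFun.restrict (p := c.cocycles i) (q := c'.cocycles i) fun x hx => by
    rcases Submodule.mem_inf.mp hx with ⟨h1, h2⟩
    refine Submodule.mem_inf.mpr ⟨f.map_grading i x h1, ?_⟩
    simp only [LinearMap.mem_ker] at h2 ⊢
    rw [← f.map_d, h2, map_zero]

/-- The induced map in cohomology. -/
def cohMap (f : CochainMap c c') (i : ℤ) :
    c.cohomology i →ₗ[K] c'.cohomology i :=
  Submodule.mapQ (c.coboundaries i) (c'.coboundaries i) (f.cocyclesMap i) (by
    rintro ⟨x, hx⟩ hmem
    simp only [CochainStruct.coboundaries, Submodule.mem_comap] at hmem ⊢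
    rcases Submodule.mem_inf.mp hmem with ⟨h1, h2⟩
    refine Submodule.mem_inf.mpr ⟨?_, ?_⟩
    · exact f.map_grading i x h1
    · rcases h2 with ⟨y, hy⟩
      exact ⟨f.toFun y, by
        have := f.map_d y
        simp only [Submodule.coe_subtype] at hy ⊢
        rw [← this, hy]
        rfl⟩)

end CochainMap

/-- A differential graded Lie algebra structure on a `K`-module `L`:
a graded cochain complex together with a degree zero graded bracket which is
graded skew-symmetric and satisfies the graded Jacobi identity and the graded
Leibniz rule. -/
structure DGLAStruct (K : Type u) [Field K] (L : Type v) [AddCommGroup L] [Module K L]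
    extends CochainStruct K L where
  bracket : L →ₗ[K] L →ₗ[K] L
  bracket_degree : ∀ i j : ℤ, ∀ x ∈ grading i, ∀ y ∈ grading j, bracket x y ∈ grading (i + j)
  bracket_skew : ∀ i j : ℤ, ∀ x ∈ grading i, ∀ y ∈ grading j,
    bracket x y = -(((-1 : K) ^ (i * j)) • bracket y x)
  bracket_jacobi : ∀ i j : ℤ, ∀ x ∈ grading i, ∀ y ∈ grading j, ∀ z : L,
    bracket x (bracket y z) =
      bracket (bracket x y) z + ((-1 : K) ^ (i * j)) • bracket y (bracket x z)
  bracket_leibniz : ∀ i : ℤ, ∀ x ∈ grading i, ∀ y : L,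
    d (bracket x y) = bracket (d x) y + ((-1 : K) ^ i) • bracket x (d y)

/-- A morphism of differential graded Lie algebras. -/
structure DGLAStructHom {K : Type u} [Field K] {L : Type v} {M : Type w}
    [AddCommGroup L] [Module K L] [AddCommGroup M] [Module K M]
    (g : DGLAStruct K L) (h : DGLAStruct K M) : Type (max u v w) where
  toFun : L →ₗ[K] M
  map_grading : ∀ i : ℤ, ∀ x ∈ g.grading i, toFun x ∈ h.grading i
  map_d : ∀ x : L, toFun (g.d x) = h.d (toFun x)
  map_bracket : ∀ x y : L, toFun (g.bracket x y) = h.bracket (toFun x) (toFun y)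

namespace DGLAStructHom

variable {K : Type u} [Field K] {L : Type v} {M : Type w}
  [AddCommGroup L] [Module K L] [AddCommGroup M] [Module K M]
  {g : DGLAStruct K L} {h : DGLAStruct K M}

/-- The underlying morphism of complexes of a morphism of DGLAs. -/
def toCochainMap (f : DGLAStructHom g h) :
    CochainMap g.toCochainStruct h.toCochainStruct :=
  ⟨f.toFun, f.map_grading, f.map_d⟩

/-- A quasi-isomorphism of DGLAs is a morphism inducing bijections in cohomology. -/
def IsQuasiIso (f : DGLAStructHom g h) : Prop :=
  ∀ i : ℤ, Function.Bijective (f.toCochainMap.cohMap i)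

end DGLAStructHom

/-- A bundled differential graded Lie algebra over `K`. -/
structure DGLA (K : Type u) [Field K] : Type (max u (v + 1)) where
  carrier : Type v
  [acg : AddCommGroup carrier]
  [mod : Module K carrier]
  str : DGLAStruct K carrier

attribute [instance] DGLA.acg DGLA.mod

namespace DGLA

variable {K : Type u} [Field K]

/-- Two DGLAs are related if there is a quasi-isomorphism from the first to the second. -/
def qisRel : DGLA.{u, v} K → DGLA.{u, v} K → Prop := fun X Y =>
  ∃ f : DGLAStructHom X.str Y.str, f.IsQuasiIso

/-- Homotopy equivalence of DGLAs: the equivalence relation generated by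
quasi-isomorphisms. -/
def HomotopyEquiv (X Y : DGLA.{u, v} K) : Prop :=
  Relation.EqvGen qisRel X Y

/-- A DGLA is abelian if its bracket is trivial. -/
def IsAbelian (X : DGLA.{u, v} K) : Prop :=
  ∀ x y : X.carrier, X.str.bracket x y = 0

/-- A DGLA is homotopy abelian if it is homotopy equivalent (i.e. quasi-isomorphic,
under the equivalence relation generated by quasi-isomorphisms) to an abelian DGLA. -/
def HomotopyAbelian (X : DGLA.{u, v} K) : Prop :=
  ∃ Y : DGLA.{u, v} K, Y.IsAbelian ∧ X.HomotopyEquiv Y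

end DGLA

/-- A zig-zag of morphisms of DGLAs (the backwards arrows being quasi-isomorphisms):
a morphism in the homotopy category of DGLAs, i.e. an `L∞` morphism of DGLAs. -/
inductive ZigZag {K : Type u} [Field K] : DGLA.{u, v} K → DGLA.{u, v} K → Type (max u (v + 1))
  | refl (X : DGLA.{u, v} K) : ZigZag X X
  | fwd {X Y Z : DGLA.{u, v} K} (f : DGLAStructHom X.str Y.str) (t : ZigZag Y Z) : ZigZag X Z
  | bwd {X Y Z : DGLA.{u, v} K} (f : DGLAStructHom Y.str X.str) (hf : f.IsQuasiIso)
      (t : ZigZag Y Z) : ZigZag X Z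

/-- The map induced in cohomology by a zig-zag of morphisms of DGLAs. -/
noncomputable def ZigZag.cohMap {K : Type u} [Field K] :
    ∀ {X Y : DGLA.{u, v} K}, ZigZag X Y → ∀ i : ℤ,
      X.str.toCochainStruct.cohomology i →ₗ[K] Y.str.toCochainStruct.cohomology i
  | _, _, .refl _, _ => LinearMap.id
  | _, _, .fwd f t, i => (t.cohMap i).comp (f.toCochainMap.cohMap i)
  | _, _, .bwd f hf t, i =>
      (t.cohMap i).comp
        ((LinearEquiv.ofBijective (f.toCochainMap.cohMap i) (hf i)).symm.toLinearMap)

/-!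
The differential graded vector space `M[t,dt] = M ⊗ K[t,dt]` of polynomial differential
forms on the affine line with coefficients in a DGLA `M`, homotopy fibres, and Cartan
homotopies.  An element of `M[t,dt]` is written `p(t) + q(t) dt` and encoded as the pair
of coefficient families `(p, q) : (ℕ →₀ M) × (ℕ →₀ M)`.
-/

/-- `M[t,dt]`: polynomial forms on the affine line with coefficients in `M`,
encoded as pairs `(p, q)` with `p(t) + q(t) dt`. -/
abbrev PolyDt (K : Type u) [Field K] (M : Type v) [AddCommGroup M] [Module K M] : Type v :=
  (ℕ →₀ M) × (ℕ →₀ M)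

section PolyDt

variable {K : Type u} [Field K] {M : Type v} [AddCommGroup M] [Module K M]

/-- Evaluation at `t = 0`, `dt = 0`. -/
noncomputable def evAt0 : PolyDt K M →ₗ[K] M :=
  (Finsupp.lapply 0).comp (LinearMap.fst K (ℕ →₀ M) (ℕ →₀ M))

/-- Evaluation at `t = 1`, `dt = 0`. -/
noncomputable def evAt1 : PolyDt K M →ₗ[K] M :=
  ((Finsupp.lsum K fun _ : ℕ => (LinearMap.id : M →ₗ[K] M)) :
      (ℕ →₀ M) →ₗ[K] M).comp (LinearMap.fst K (ℕ →₀ M) (ℕ →₀ M))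

/-- The element `t^n m` of `M[t,dt]`. -/
noncomputable def inlP (n : ℕ) (m : M) : PolyDt K M := (Finsupp.single n m, 0)

/-- The element `t^n dt m` of `M[t,dt]`. -/
noncomputable def inrP (n : ℕ) (m : M) : PolyDt K M := (0, Finsupp.single n m)

/-- The degree `j` part of `M[t,dt]` (with `t` of degree `0` and `dt` of degree `1`). -/
def polyGrading (h : DGLAStruct K M) (j : ℤ) : Submodule K (PolyDt K M) where
  carrier := {x | (∀ n : ℕ, x.1 n ∈ h.grading j) ∧ ∀ n : ℕ, x.2 n ∈ h.grading (j - 1)}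
  zero_mem' := ⟨fun n => by simp, fun n => by simp⟩
  add_mem' := by
    rintro x y ⟨hx1, hx2⟩ ⟨hy1, hy2⟩
    refine ⟨fun n => ?_, fun n => ?_⟩
    · have : (x + y).1 n = x.1 n + y.1 n := by simp
      rw [this]; exact (h.grading j).add_mem (hx1 n) (hy1 n)
    · have : (x + y).2 n = x.2 n + y.2 n := by simp
      rw [this]; exact (h.grading (j - 1)).add_mem (hx2 n) (hy2 n)
  smul_mem' := by
    rintro c x ⟨hx1, hx2⟩
    refine ⟨fun n => ?_, fun n => ?_⟩
    · have : (c • x).1 n = c • x.1 n := by simp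
      rw [this]; exact (h.grading j).smul_mem c (hx1 n)
    · have : (c • x).2 n = c • x.2 n := by simp
      rw [this]; exact (h.grading (j - 1)).smul_mem c (hx2 n)

/-- The property that a DGLA structure `mt` on `M[t,dt]` is *the* DGLA of polynomial
forms on the affine line with coefficients in `(M, h)`: it is characterised by its
grading and by its differential and bracket on the elements `t^n m` and `t^n dt m`. -/
structure IsPolyFormsDGLA (h : DGLAStruct K M) (mt : DGLAStruct K (PolyDt K M)) : Prop where
  grading_eq : ∀ j : ℤ, mt.grading j = polyGrading h j
  d_inl : ∀ (n : ℕ) (m : M), mt.d (inlP n m) = inlP n (h.d m) + inrP (n - 1) (n • m)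
  d_inr : ∀ (n : ℕ) (m : M), mt.d (inrP n m) = -inrP n (h.d m)
  bracket_ll : ∀ (n n' : ℕ) (m m' : M),
    mt.bracket (inlP n m) (inlP n' m') = inlP (n + n') (h.bracket m m')
  bracket_lr : ∀ i : ℤ, ∀ m ∈ h.grading i, ∀ (n n' : ℕ) (m' : M),
    mt.bracket (inlP n m) (inrP n' m') = ((-1 : K) ^ i) • inrP (n + n') (h.bracket m m')
  bracket_rl : ∀ (n n' : ℕ) (m m' : M),
    mt.bracket (inrP n m) (inlP n' m') = inrP (n + n') (h.bracket m m')
  bracket_rr : ∀ (n n' : ℕ) (m m' : M),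
    mt.bracket (inrP n m) (inrP n' m') = 0

end PolyDt

section Fibre

variable {K : Type u} [Field K] {L : Type v} {M : Type v}
  [AddCommGroup L] [Module K L] [AddCommGroup M] [Module K M]

/-- The underlying module of the homotopy fibre
`TW(χ) = { (l, m(t,dt)) ∈ L × M[t,dt] | m(0,0) = 0, m(1,0) = χ(l) }`
of a morphism of DGLAs `χ : L → M`. -/
noncomputable def fibreSub {g : DGLAStruct K L} {h : DGLAStruct K M}
    (χ : DGLAStructHom g h) : Submodule K (L × PolyDt K M) :=
  LinearMap.ker
    ((evAt0.comp (LinearMap.snd K L (PolyDt K M))).prod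
      ((evAt1.comp (LinearMap.snd K L (PolyDt K M))) -
        χ.toFun.comp (LinearMap.fst K L (PolyDt K M))))

/-- The property that a DGLA structure `tw` on the module underlying the homotopy fibre
of `χ : L → M` is *the* homotopy fibre DGLA: differential, bracket and grading are
computed componentwise from `L` and `M[t,dt]`. -/
structure IsHomotopyFibre {g : DGLAStruct K L} {h : DGLAStruct K M}
    (χ : DGLAStructHom g h) (mt : DGLAStruct K (PolyDt K M))
    (tw : DGLAStruct K ↥(fibreSub χ)) : Prop where
  grading_eq : ∀ i : ℤ, tw.grading i =
    Submodule.comap (fibreSub χ).subtype ((g.grading i).prod (mt.grading i))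
  d_eq : ∀ v : fibreSub χ, (tw.d v : L × PolyDt K M) =
    (g.d (v : L × PolyDt K M).1, mt.d (v : L × PolyDt K M).2)
  bracket_eq : ∀ v w : fibreSub χ, (tw.bracket v w : L × PolyDt K M) =
    (g.bracket (v : L × PolyDt K M).1 (w : L × PolyDt K M).1,
      mt.bracket (v : L × PolyDt K M).2 (w : L × PolyDt K M).2)

end Fibre

/-- A Cartan homotopy between differential graded Lie algebras: a degree `-1` linear
map `i : L → M` such that `i_{[a,b]} = [i_a, d_M i_b]` and `[i_a, i_b] = 0`. -/
structure CartanHomotopy {K : Type u} [Field K] {L : Type v} {M : Type w}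
    [AddCommGroup L] [Module K L] [AddCommGroup M] [Module K M]
    (g : DGLAStruct K L) (h : DGLAStruct K M) : Type (max u v w) where
  toFun : L →ₗ[K] M
  map_grading : ∀ i : ℤ, ∀ x ∈ g.grading i, toFun x ∈ h.grading (i - 1)
  cartan_bracket : ∀ a b : L, toFun (g.bracket a b) = h.bracket (toFun a) (h.d (toFun b))
  cartan_square : ∀ a b : L, h.bracket (toFun a) (toFun b) = 0

/-!
Integration of forms over `[0, t]` is a contracting homotopy of `{ω ∈ M[t,dt] : ω(0,0) = 0}`.
Hence a cocycle of `TW(χ)` is `(l, d ω)` with `ω(0,0) = 0`, and `χ(l) = d(ω(1,0))` is exact in `M`.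
Injectivity of `H^*(χ)` gives `l = d l'`, and with `c = χ(l') - ω(1,0)` the element
`(l', ω + t c)` of `TW(χ)` has differential `(l, d ω + dt c)`.  So every cohomology class is
represented by some `(0, dt m)`, and these elements commute because `dt² = 0`.  Over a field, a
linear choice of such representatives is a quasi-isomorphism to `TW(χ)` from its cohomology with
zero differential and zero bracket.
-/

namespace CochainStruct

open DirectSum

variable {K : Type u} [Field K] {V : Type v} [AddCommGroup V] [Module K V]

/-- The projection sending a cocycle to its cohomology class. -/
def toCohomology (c : CochainStruct K V) (i : ℤ) : c.cocycles i →ₗ[K] c.cohomology i :=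
  (c.coboundaries i).mkQ

theorem toCohomology_surjective (c : CochainStruct K V) (i : ℤ) :
    Function.Surjective (c.toCohomology i) :=
  (c.coboundaries i).mkQ_surjective

theorem toCohomology_eq_zero_iff {c : CochainStruct K V} {i : ℤ} {z : c.cocycles i} :
    c.toCohomology i z = 0 ↔ (z : V) ∈ LinearMap.range c.d := by
  refine (Submodule.Quotient.mk_eq_zero _).trans ?_
  exact ⟨fun hz => hz.2, fun hz => ⟨z.2.1, hz⟩⟩

theorem toCohomology_eq_iff {c : CochainStruct K V} {i : ℤ} {z z' : c.cocycles i} :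
    c.toCohomology i z = c.toCohomology i z' ↔ (z - z' : V) ∈ LinearMap.range c.d := by
  rw [← sub_eq_zero, ← map_sub, toCohomology_eq_zero_iff, Submodule.coe_sub]

theorem d_decompose (c : CochainStruct K V) [Decomposition c.grading] (i : ℤ) (x : V) :
    c.d (decompose c.grading x i) = decompose c.grading (c.d x) (i + 1) := by
  induction x using Decomposition.inductionOn c.grading with
  | zero => simp
  | @homogeneous j m =>
    have hdm : c.d m ∈ c.grading (j + 1) := c.d_degree j m m.2
    obtain rfl | hij := eq_or_ne j i
    · rw [decompose_of_mem_same _ m.2, decompose_of_mem_same _ hdm]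
    · rw [decompose_of_mem_ne _ m.2 hij, decompose_of_mem_ne _ hdm (by simpa using hij), map_zero]
  | add x y hx hy => simp [hx, hy, decompose_add]

theorem exists_mem_grading_d_eq (c : CochainStruct K V) {i : ℤ} {z : V} (hz : z ∈ c.grading i)
    (hzd : z ∈ LinearMap.range c.d) : ∃ y ∈ c.grading (i - 1), c.d y = z := by
  let := c.isInternal.chooseDecomposition
  obtain ⟨y, rfl⟩ := hzd
  refine ⟨decompose c.grading y (i - 1), SetLike.coe_mem _, ?_⟩
  rw [d_decompose, sub_add_cancel, decompose_of_mem_same _ hz]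

/-- A cochain complex regarded as a DGLA with trivial bracket. -/
def toAbelianDGLA (c : CochainStruct K V) : DGLAStruct K V where
  toCochainStruct := c
  bracket := 0
  bracket_degree := by simp
  bracket_skew := by simp
  bracket_jacobi := by simp
  bracket_leibniz := by simp

end CochainStruct

theorem CochainMap.mem_range_d_of_cohMap_injective {K : Type u} [Field K] {V : Type v} {W : Type w}
    [AddCommGroup V] [Module K V] [AddCommGroup W] [Module K W] {c : CochainStruct K V}
    {c' : CochainStruct K W} {f : CochainMap c c'} {i : ℤ} (hf : Function.Injective (f.cohMap i))
    {z : V} (hz : z ∈ c.cocycles i) (hfz : f.toFun z ∈ LinearMap.range c'.d) :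
    z ∈ LinearMap.range c.d := by
  have class_eq_zero : c.toCohomology i ⟨z, hz⟩ = 0 :=
    (injective_iff_map_eq_zero _).mp hf _ (CochainStruct.toCohomology_eq_zero_iff.mpr hfz)
  exact CochainStruct.toCohomology_eq_zero_iff.mp class_eq_zero

section GradedVectorSpace

open DirectSum

theorem isInternal_range_lof {R : Type*} [Ring R] {ι : Type*} [DecidableEq ι] {N : ι → Type*}
    [∀ i, AddCommGroup (N i)] [∀ i, Module R (N i)] :
    IsInternal fun i => LinearMap.range (lof R ι N i) := by
  refine isInternal_submodule_of_iSupIndep_of_iSup_eq_top (fun i => ?_)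
    DFinsupp.iSup_range_lsingle
  have others_le_ker : ⨆ j, ⨆ (_ : j ≠ i), LinearMap.range (lof R ι N j) ≤
      LinearMap.ker (component R ι N i) := by
    refine iSup₂_le fun j hj => ?_
    rintro _ ⟨x, rfl⟩
    exact DFinsupp.single_eq_of_ne hj.symm
  refine Disjoint.mono_right others_le_ker (Submodule.disjoint_def.mpr ?_)
  rintro _ ⟨x, rfl⟩ hx
  rw [← component.lof_self R i x, LinearMap.mem_ker.mp hx, map_zero]

variable {K : Type u} [Field K] {H : ℤ → Type w} [∀ i, AddCommGroup (H i)] [∀ i, Module K (H i)]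

variable (K H) in
/-- The direct sum of a family of vector spaces `H i` placed in degree `i`, with zero
differential. -/
noncomputable def CochainStruct.ofDirectSum : CochainStruct K (⨁ i, H i) where
  grading i := LinearMap.range (lof K ℤ H i)
  isInternal := isInternal_range_lof
  d := 0
  d_degree := by simp
  d_sq := by simp

theorem CochainStruct.ofDirectSum_exists_toCohomology_lof_eq {i : ℤ}
    (x : (ofDirectSum K H).cohomology i) :
    ∃ y : H i, (ofDirectSum K H).toCohomology i ⟨lof K ℤ H i y, ⟨y, rfl⟩, rfl⟩ = x := by
  obtain ⟨⟨_, ⟨y, rfl⟩, _⟩, rfl⟩ := toCohomology_surjective _ i x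
  exact ⟨y, rfl⟩

variable {V : Type v} [AddCommGroup V] [Module K V] {c : CochainStruct K V}

/-- The cochain map out of a graded vector space with zero differential determined by a linear
choice of cocycles in each degree. -/
noncomputable def CochainMap.ofCocycles (s : ∀ i, H i →ₗ[K] c.cocycles i) :
    CochainMap (.ofDirectSum K H) c where
  toFun := toModule K ℤ V fun i => (c.cocycles i).subtype ∘ₗ s i
  map_grading := by
    rintro i _ ⟨x, rfl⟩
    rw [toModule_lof]
    exact (s i x).2.1
  map_d x := by
    induction x using DirectSum.induction_on with
    | zero => simp
    | of i x =>
      rw [← lof_eq_of K, toModule_lof]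
      exact (map_zero _).trans (s i x).2.2.symm
    | add x y hx hy => simp only [map_add, hx, hy]

theorem CochainMap.ofCocycles_lof (s : ∀ i, H i →ₗ[K] c.cocycles i) (i : ℤ) (x : H i) :
    (ofCocycles s).toFun (lof K ℤ H i x) = s i x :=
  toModule_lof ..

theorem CochainMap.ofCocycles_mem (s : ∀ i, H i →ₗ[K] c.cocycles i) {A : Submodule K V}
    (hs : ∀ i x, (s i x : V) ∈ A) (x : ⨁ i, H i) : (ofCocycles s).toFun x ∈ A := by
  induction x using DirectSum.induction_on with
  | zero => simp
  | of i x => rw [← lof_eq_of K, ofCocycles_lof]; exact hs i x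
  | add x y hx hy => rw [map_add]; exact A.add_mem hx hy

theorem CochainMap.ofCocycles_cohMap_bijective {s : ∀ i, H i →ₗ[K] c.cocycles i} {i : ℤ}
    (hs : Function.Bijective (c.toCohomology i ∘ s i)) :
    Function.Bijective ((ofCocycles s).cohMap i) := by
  let ofLof (y : H i) : (CochainStruct.ofDirectSum K H).cohomology i :=
    CochainStruct.toCohomology _ i ⟨lof K ℤ H i y, ⟨y, rfl⟩, rfl⟩
  have cohMap_comp : (ofCocycles s).cohMap i ∘ ofLof = c.toCohomology i ∘ s i :=
    funext fun y => congrArg (c.toCohomology i) (Subtype.ext (ofCocycles_lof s i y))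
  rw [← cohMap_comp] at hs
  exact ⟨hs.1.of_comp_right CochainStruct.ofDirectSum_exists_toCohomology_lof_eq, hs.2.of_comp⟩

end GradedVectorSpace

namespace DGLA

variable {K : Type u} [Field K]

theorem homotopyAbelian_of_forall_exists_toCohomology_eq (X : DGLA.{u, v} K)
    {A : Submodule K X.carrier} (hA : ∀ x ∈ A, ∀ y ∈ A, X.str.bracket x y = 0)
    (hrep : ∀ i x, ∃ a : X.str.cocycles i, (a : X.carrier) ∈ A ∧ X.str.toCohomology i a = x) :
    X.HomotopyAbelian := by
  let B (i : ℤ) : Submodule K (X.str.cocycles i) := A.comap (X.str.cocycles i).subtype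
  have class_surjective (i : ℤ) :
      LinearMap.range ((X.str.toCohomology i).domRestrict (B i)) = ⊤ :=
    LinearMap.range_eq_top.mpr fun x => have ⟨a, haA, hax⟩ := hrep i x; ⟨⟨a, haA⟩, hax⟩
  choose σ hσ using fun i => LinearMap.exists_rightInverse_of_surjective _ (class_surjective i)
  let s (i : ℤ) : X.str.cohomology i →ₗ[K] X.str.cocycles i := (B i).subtype ∘ₗ σ i
  have section_s (i : ℤ) : X.str.toCohomology i ∘ s i = id :=
    funext (LinearMap.congr_fun (hσ i))
  let F : CochainMap _ X.str.toCochainStruct := .ofCocycles s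
  have F_mem : ∀ x, F.toFun x ∈ A := CochainMap.ofCocycles_mem s fun i x => (σ i x).2
  let Y : DGLA K := ⟨_, (CochainStruct.ofDirectSum K X.str.cohomology).toAbelianDGLA⟩
  let f : DGLAStructHom Y.str X.str :=
    { F with map_bracket x y := (map_zero F.toFun).trans (hA _ (F_mem x) _ (F_mem y)).symm }
  have f_quasiIso : f.IsQuasiIso := fun i =>
    CochainMap.ofCocycles_cohMap_bijective (by rw [section_s]; exact Function.bijective_id)
  exact ⟨Y, fun _ _ => rfl, .symm _ _ (.rel _ _ ⟨f, f_quasiIso⟩)⟩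

end DGLA

namespace PolyDt

variable {K : Type u} [Field K] {M : Type v} [AddCommGroup M] [Module K M] {N : Type w}
  [AddCommGroup N] [Module K N]

theorem linearMap_ext {f f' : PolyDt K M →ₗ[K] N} (inlP_eq : ∀ n m, f (inlP n m) = f' (inlP n m))
    (inrP_eq : ∀ n m, f (inrP n m) = f' (inrP n m)) : f = f' :=
  LinearMap.prod_ext (Finsupp.lhom_ext inlP_eq) (Finsupp.lhom_ext inrP_eq)

theorem inlP_zero (n : ℕ) : (inlP n 0 : PolyDt K M) = 0 := by
  simp [inlP]

theorem inrP_zero (n : ℕ) : (inrP n 0 : PolyDt K M) = 0 := by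
  simp [inrP]

theorem evAt0_inlP_zero (m : M) : evAt0 (K := K) (inlP 0 m) = m := by
  simp [evAt0, inlP]

theorem evAt0_inlP_succ (n : ℕ) (m : M) : evAt0 (K := K) (inlP (n + 1) m) = 0 := by
  simp [evAt0, inlP]

theorem evAt0_inrP (n : ℕ) (m : M) : evAt0 (K := K) (inrP n m) = 0 := by
  simp [evAt0, inrP]

theorem evAt1_inlP (n : ℕ) (m : M) : evAt1 (K := K) (inlP n m) = m := by
  simp [evAt1, inlP]

theorem evAt1_inrP (n : ℕ) (m : M) : evAt1 (K := K) (inrP n m) = 0 := by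
  simp [evAt1, inrP]

variable {h : DGLAStruct K M} {j : ℤ}

theorem inlP_mem_polyGrading {m : M} (hm : m ∈ h.grading j) (n : ℕ) :
    inlP n m ∈ polyGrading h j := by
  classical
  refine ⟨fun k => ?_, fun _ => zero_mem _⟩
  simp only [inlP, Finsupp.single_apply]
  split_ifs
  exacts [hm, zero_mem _]

theorem inrP_mem_polyGrading {m : M} (hm : m ∈ h.grading (j - 1)) (n : ℕ) :
    inrP n m ∈ polyGrading h j := by
  classical
  refine ⟨fun _ => zero_mem _, fun k => ?_⟩
  simp only [inrP, Finsupp.single_apply]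
  split_ifs
  exacts [hm, zero_mem _]

theorem evAt1_mem {ω : PolyDt K M} (hω : ω ∈ polyGrading h j) : evAt1 ω ∈ h.grading j :=
  Submodule.sum_mem _ fun n _ => hω.1 n

/-- Integration of forms over `[0, t]`, that is `p(t) + q(t) dt ↦ ∫₀ᵗ q(s) ds`: the homotopy
operator of the Poincaré lemma for `M[t,dt]`.  Where `n + 1 = 0` in `K`, the junk value
`0⁻¹ = 0` makes `tⁿ dt` integrate to `0`. -/
noncomputable def integral : PolyDt K M →ₗ[K] PolyDt K M :=
  LinearMap.inl K (ℕ →₀ M) (ℕ →₀ M) ∘ₗ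
    (Finsupp.lsum K fun n : ℕ => (n + 1 : K)⁻¹ • Finsupp.lsingle (n + 1)) ∘ₗ
      LinearMap.snd K (ℕ →₀ M) (ℕ →₀ M)

theorem integral_inlP (n : ℕ) (m : M) : integral (K := K) (inlP n m) = 0 := by
  simp [integral, inlP]

theorem integral_inrP (n : ℕ) (m : M) :
    integral (K := K) (inrP n m) = inlP (n + 1) ((n + 1 : K)⁻¹ • m) := by
  simp [integral, inlP, inrP]

theorem evAt0_integral (ω : PolyDt K M) : evAt0 (integral ω) = 0 := by
  suffices evAt0 ∘ₗ integral = (0 : PolyDt K M →ₗ[K] M) from LinearMap.congr_fun this ω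
  apply linearMap_ext <;> simp [integral_inlP, integral_inrP, evAt0_inlP_succ]

theorem integral_mem {ω : PolyDt K M} (hω : ω ∈ polyGrading h j) :
    integral ω ∈ polyGrading h (j - 1) := by
  have integral_eq_sum : integral ω =
      ω.2.sum fun n m => (inlP (n + 1) ((n + 1 : K)⁻¹ • m) : PolyDt K M) := by
    simp [integral, inlP, Finsupp.sum, Prod.ext_iff, Prod.fst_sum, Prod.snd_sum]
  rw [integral_eq_sum]
  exact Submodule.sum_mem _ fun n _ => inlP_mem_polyGrading (Submodule.smul_mem _ _ (hω.2 n)) _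

end PolyDt

namespace IsPolyFormsDGLA

open PolyDt

variable {K : Type u} [Field K] {M : Type v} [AddCommGroup M] [Module K M] {h : DGLAStruct K M}
  {mt : DGLAStruct K (PolyDt K M)}

theorem evAt1_d (hmt : IsPolyFormsDGLA h mt) (ω : PolyDt K M) :
    evAt1 (mt.d ω) = h.d (evAt1 ω) := by
  suffices evAt1 ∘ₗ mt.d = h.d ∘ₗ evAt1 from LinearMap.congr_fun this ω
  apply linearMap_ext <;>
    simp [hmt.d_inl, hmt.d_inr, evAt1_inlP, evAt1_inrP]

theorem d_integral_add_integral_d [CharZero K] (hmt : IsPolyFormsDGLA h mt) (ω : PolyDt K M) :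
    mt.d (integral ω) + integral (mt.d ω) = ω - inlP 0 (evAt0 ω) := by
  let const : M →ₗ[K] PolyDt K M := LinearMap.inl K _ _ ∘ₗ Finsupp.lsingle 0
  have const_apply (m : M) : const m = inlP 0 m := rfl
  suffices mt.d ∘ₗ integral + integral ∘ₗ mt.d = LinearMap.id - const ∘ₗ evAt0 from
    LinearMap.congr_fun this ω
  have succ_ne_zero (n : ℕ) : (n + 1 : K) ≠ 0 := n.cast_add_one_ne_zero
  refine linearMap_ext (fun n m => ?_) (fun n m => ?_)
  · cases n with
    | zero =>
      simp [const_apply, integral_inlP, hmt.d_inl, evAt0_inlP_zero, inrP_zero]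
    | succ n =>
      simp [const_apply, integral_inlP, integral_inrP, hmt.d_inl, evAt0_inlP_succ, inlP_zero,
        ← Nat.cast_smul_eq_nsmul K, succ_ne_zero]
  · simp [const_apply, integral_inrP, hmt.d_inl, hmt.d_inr, evAt0_inrP, inlP_zero,
      ← Nat.cast_smul_eq_nsmul K, succ_ne_zero]

theorem d_integral_of_d_eq_zero [CharZero K] (hmt : IsPolyFormsDGLA h mt) {ω : PolyDt K M}
    (hω : mt.d ω = 0) (hω0 : evAt0 ω = 0) : mt.d (integral ω) = ω := by
  have homotopy := hmt.d_integral_add_integral_d ω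
  rw [hω, hω0] at homotopy
  simpa [inlP_zero] using homotopy

end IsPolyFormsDGLA

section HomotopyFibre

open PolyDt

variable {K : Type u} [Field K] {L M : Type v} [AddCommGroup L] [Module K L] [AddCommGroup M]
  [Module K M] {g : DGLAStruct K L} {h : DGLAStruct K M} {χ : DGLAStructHom g h}

theorem mem_fibreSub_iff {v : L × PolyDt K M} :
    v ∈ fibreSub χ ↔ evAt0 v.2 = 0 ∧ evAt1 v.2 = χ.toFun v.1 := by
  simp [fibreSub, sub_eq_zero]

/-- The inclusion `m ↦ (0, dt m)` of the shifted complex `M[-1]` into `TW(χ)`. -/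
noncomputable def fibreDt (χ : DGLAStructHom g h) : M →ₗ[K] fibreSub χ :=
  LinearMap.codRestrict _
    (LinearMap.inr K L (PolyDt K M) ∘ₗ LinearMap.inr K (ℕ →₀ M) (ℕ →₀ M) ∘ₗ Finsupp.lsingle 0)
    fun m => mem_fibreSub_iff.mpr ⟨evAt0_inrP 0 m, (evAt1_inrP 0 m).trans (map_zero _).symm⟩

theorem coe_fibreDt (m : M) : (fibreDt χ m : L × PolyDt K M) = (0, inrP 0 m) :=
  rfl

namespace IsHomotopyFibre

variable {mt : DGLAStruct K (PolyDt K M)} {tw : DGLAStruct K (fibreSub χ)}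

theorem mem_cocycles_iff (htw : IsHomotopyFibre χ mt tw) {i : ℤ} {v : fibreSub χ} :
    v ∈ tw.cocycles i ↔ v.1.1 ∈ g.cocycles i ∧ v.1.2 ∈ mt.cocycles i := by
  simp only [CochainStruct.cocycles, Submodule.mem_inf, LinearMap.mem_ker, htw.grading_eq,
    Submodule.mem_comap, Submodule.subtype_apply, Submodule.mem_prod, ← Submodule.coe_eq_zero,
    htw.d_eq, Prod.mk_eq_zero]
  exact and_and_and_comm

theorem bracket_fibreDt (htw : IsHomotopyFibre χ mt tw) (hmt : IsPolyFormsDGLA h mt) (m m' : M) :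
    tw.bracket (fibreDt χ m) (fibreDt χ m') = 0 := by
  refine Subtype.ext ((htw.bracket_eq _ _).trans ?_)
  simp [coe_fibreDt, hmt.bracket_rr]

theorem fibreDt_mem_cocycles (htw : IsHomotopyFibre χ mt tw) (hmt : IsPolyFormsDGLA h mt) {i : ℤ}
    {m : M} (hm : m ∈ h.cocycles (i - 1)) : fibreDt χ m ∈ tw.cocycles i := by
  have hdm : h.d m = 0 := hm.2
  refine htw.mem_cocycles_iff.mpr ⟨zero_mem _, ?_, ?_⟩
  · rw [coe_fibreDt, hmt.grading_eq]
    exact inrP_mem_polyGrading hm.1 0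
  · simp [coe_fibreDt, hmt.d_inr, hdm, inrP_zero]

theorem exists_fibreDt_toCohomology_eq [CharZero K] (htw : IsHomotopyFibre χ mt tw)
    (hmt : IsPolyFormsDGLA h mt) {i : ℤ} (hH : Function.Injective (χ.toCochainMap.cohMap i))
    (x : tw.cohomology i) :
    ∃ a : tw.cocycles i, (a : fibreSub χ) ∈ LinearMap.range (fibreDt χ) ∧
      tw.toCohomology i a = x := by
  obtain ⟨⟨⟨⟨l, ω⟩, hv⟩, hz⟩, rfl⟩ := tw.toCohomology_surjective i x
  obtain ⟨hω0, hω1⟩ : evAt0 ω = 0 ∧ evAt1 ω = χ.toFun l := mem_fibreSub_iff.mp hv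
  obtain ⟨hl, hω, hdω⟩ : l ∈ g.cocycles i ∧ ω ∈ mt.grading i ∧ mt.d ω = 0 :=
    htw.mem_cocycles_iff.mp hz
  rw [hmt.grading_eq] at hω
  have hχl : h.d (evAt1 (integral ω)) = χ.toFun l := by
    rw [← hmt.evAt1_d, hmt.d_integral_of_d_eq_zero hdω hω0, hω1]
  obtain ⟨l', hl', rfl⟩ := g.exists_mem_grading_d_eq hl.1
    (CochainMap.mem_range_d_of_cohMap_injective hH hl ⟨_, hχl⟩)
  set c : M := χ.toFun l' - evAt1 (integral ω) with c_def
  have hdc : h.d c = 0 := by rw [c_def, map_sub, hχl, χ.map_d, sub_self]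
  have hc : c ∈ h.cocycles (i - 1) :=
    ⟨sub_mem (χ.map_grading _ _ hl') (evAt1_mem (integral_mem hω)), hdc⟩
  let w : fibreSub χ := ⟨(l', integral ω + inlP 1 c), mem_fibreSub_iff.mpr
    ⟨by simp [evAt0_integral, evAt0_inlP_succ 0], by simp [evAt1_inlP, c_def]⟩⟩
  have hdw : (tw.d w : L × PolyDt K M) = (g.d l', ω + inrP 0 c) := by
    simp [w, htw.d_eq, hmt.d_integral_of_d_eq_zero hdω hω0, hmt.d_inl, hdc, inlP_zero]
  refine ⟨⟨fibreDt χ (-c), htw.fibreDt_mem_cocycles hmt (neg_mem hc)⟩, ⟨-c, rfl⟩, ?_⟩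
  refine (CochainStruct.toCohomology_eq_iff.mpr ⟨w, Subtype.ext ?_⟩).symm
  simp [hdw, coe_fibreDt]

end IsHomotopyFibre

end HomotopyFibre

theorem homotopy_fibre_homotopy_abelian_general {K : Type u} [Field K] [CharZero K]
    {L M : Type v} [AddCommGroup L] [Module K L] [AddCommGroup M] [Module K M]
    {g : DGLAStruct K L} {h : DGLAStruct K M} (χ : DGLAStructHom g h)
    (hH : ∀ i : ℤ, Function.Injective (χ.toCochainMap.cohMap i))
    (mt : DGLAStruct K (PolyDt K M)) (hmt : IsPolyFormsDGLA h mt)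
    (tw : DGLAStruct K ↥(fibreSub χ)) (htw : IsHomotopyFibre χ mt tw) :
    DGLA.HomotopyAbelian (DGLA.mk (K := K) ↥(fibreSub χ) tw) := by
  apply DGLA.homotopyAbelian_of_forall_exists_toCohomology_eq
    (A := LinearMap.range (fibreDt χ))
  · rintro _ ⟨m, rfl⟩ _ ⟨m', rfl⟩
    exact htw.bracket_fibreDt hmt m m'
  · exact fun i => htw.exists_fibreDt_toCohomology_eq hmt (hH i)

/-- Let `χ : L → M` be an injective morphism of differential graded
Lie algebras over a field `K` of characteristic `0` such that the induced map
`H^*(L) → H^*(M)` is injective.  Then the homotopy fibre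
`TW(χ) = { (l, m(t,dt)) ∈ L × M[t,dt] : m(0,0) = 0, m(1,0) = χ(l) }`
is a homotopy abelian DGLA.  (Here `mt` is the DGLA of polynomial forms `M[t,dt]` and
`tw` the componentwise DGLA structure on the homotopy fibre.) -/
theorem homotopy_fibre_homotopy_abelian {K : Type u} [Field K] [CharZero K]
    {L M : Type u} [AddCommGroup L] [Module K L] [AddCommGroup M] [Module K M]
    {g : DGLAStruct K L} {h : DGLAStruct K M} (χ : DGLAStructHom g h)
    (hχ : Function.Injective χ.toFun)
    (hH : ∀ i : ℤ, Function.Injective (χ.toCochainMap.cohMap i))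
    (mt : DGLAStruct K (PolyDt K M)) (hmt : IsPolyFormsDGLA h mt)
    (tw : DGLAStruct K ↥(fibreSub χ)) (htw : IsHomotopyFibre χ mt tw) :
    DGLA.HomotopyAbelian (DGLA.mk (K := K) ↥(fibreSub χ) tw) :=
  homotopy_fibre_homotopy_abelian_general χ hH mt hmt tw htw
end

section
/- Let L, M be differential graded Lie algebras over a field K of characteristic 0 and i : L → M a Cartan homotopy, i.e. a degree −1 linear map with i_{[a,b]} = [i_a, d_M i_b] and [i_a, i_b] = 0 for all a,b ∈ L. Then the Lie derivative l : L → M, l_a = d_M i_a + i_{d_L a}, is a morphism of differential graded Lie algebras; moreover the Cartan homotopy conditions are equivalent to i_{[a,b]} = [i_a, l_b] and [i_a, i_b] = 0, and, as a morphism of complexes, l is homotopic to 0 with homotopy i. -/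
/-!
Basic homotopical algebra of differential graded Lie algebras over a field of
characteristic zero, following [Iacono, "Deformations and obstructions of pairs (X,D)"].

A differential graded Lie algebra (DGLA) is encoded as a `K`-module together with an
internal `ℤ`-grading (a family of submodules whose direct sum is the whole module),
a differential of degree `+1` squaring to zero, and a bracket which is graded
skew-symmetric, satisfies the graded Jacobi identity and the graded Leibniz rule.
-/

universe u v w

/-!
Substituting `i_{[a,b]} = [i_a, l_b]` into `l_{[a,b]} = d i_{[a,b]} + i_{d[a,b]}` and expanding
both differentials by the Leibniz rule gives `[l_a, l_b]` up to the term
`± [i_a, l_{d b} - d l_b]`. This vanishes because `l` is the graded commutator of `i` with the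
differentials, which square to zero.
-/

theorem linearMap_ext_of_iSup_eq_top {ι R V W : Type*} [Semiring R]
    [AddCommMonoid V] [Module R V] [AddCommMonoid W] [Module R W] {A : ι → Submodule R V}
    (hA : ⨆ i, A i = ⊤) {f f' : V →ₗ[R] W} (hff' : ∀ i, ∀ x ∈ A i, f x = f' x) : f = f' := by
  have top_le : ⊤ ≤ LinearMap.eqLocus f f' := hA.ge.trans (iSup_le hff')
  exact LinearMap.eqLocus_eq_top.mp (top_le_iff.mp top_le)

namespace CochainStruct

variable {K : Type u} [Field K] {V : Type v} [AddCommGroup V] [Module K V]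
  {W : Type w} [AddCommGroup W] [Module K W]

/-- `f` is a graded map of degree `-1`, the degree of Cartan homotopies and of homotopies between
morphisms of complexes. -/
def HasDegreeNegOne (c : CochainStruct K V) (c' : CochainStruct K W) (f : V →ₗ[K] W) : Prop :=
  ∀ i : ℤ, ∀ x ∈ c.grading i, f x ∈ c'.grading (i - 1)

/-- The Lie derivative `l_a = d j_a + j_{d a}` of a linear map `j` between graded complexes: the
graded commutator of `j` with the differentials, with the sign it has for `j` of degree `-1`. -/
def lieDerivative (c : CochainStruct K V) (c' : CochainStruct K W) (j : V →ₗ[K] W) :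
    V →ₗ[K] W :=
  c'.d ∘ₗ j + j ∘ₗ c.d

/-- `H` is a homotopy from `f` to `f'`, that is, a degree `-1` map with `f - f' = d H + H d`.
The maps `f` and `f'` are given by their underlying linear maps. -/
structure IsHomotopy (c : CochainStruct K V) (c' : CochainStruct K W)
    (H f f' : V →ₗ[K] W) : Prop where
  hasDegreeNegOne : c.HasDegreeNegOne c' H
  sub_eq : ∀ x : V, f x - f' x = c'.d (H x) + H (c.d x)

variable (c : CochainStruct K V) (c' : CochainStruct K W) (j : V →ₗ[K] W)

theorem lieDerivative_apply (x : V) : c.lieDerivative c' j x = c'.d (j x) + j (c.d x) :=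
  rfl

theorem lieDerivative_d (x : V) :
    c.lieDerivative c' j (c.d x) = c'.d (c.lieDerivative c' j x) := by
  simp [lieDerivative_apply, c.d_sq, c'.d_sq]

variable {c c' j}

theorem lieDerivative_mem_grading (hj : c.HasDegreeNegOne c' j) (i : ℤ) (x : V)
    (hx : x ∈ c.grading i) : c.lieDerivative c' j x ∈ c'.grading i := by
  have d_j_mem : c'.d (j x) ∈ c'.grading i := by
    simpa only [sub_add_cancel] using c'.d_degree _ _ (hj i x hx)
  have j_d_mem : j (c.d x) ∈ c'.grading i := by
    simpa only [add_sub_cancel_right] using hj _ _ (c.d_degree i x hx)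
  exact add_mem d_j_mem j_d_mem

theorem isHomotopy_lieDerivative_zero (hj : c.HasDegreeNegOne c' j) :
    c.IsHomotopy c' j (c.lieDerivative c' j) 0 :=
  ⟨hj, fun _ => sub_zero _⟩

end CochainStruct

namespace DGLAStruct

open CochainStruct

variable {K : Type u} [Field K] {L : Type v} {M : Type w}
  [AddCommGroup L] [Module K L] [AddCommGroup M] [Module K M]
  {g : DGLAStruct K L} {h : DGLAStruct K M} {j : L →ₗ[K] M}

theorem bracket_lieDerivative {a b : L} (hab : h.bracket (j a) (j (g.d b)) = 0) :
    h.bracket (j a) (g.lieDerivative h.toCochainStruct j b) = h.bracket (j a) (h.d (j b)) := by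
  rw [lieDerivative_apply, map_add, hab, add_zero]

variable (g h j) in
theorem cartan_conditions_iff_lieDerivative :
    ((∀ a b : L, j (g.bracket a b) = h.bracket (j a) (h.d (j b))) ∧
        ∀ a b : L, h.bracket (j a) (j b) = 0) ↔
      ((∀ a b : L, j (g.bracket a b) =
          h.bracket (j a) (g.lieDerivative h.toCochainStruct j b)) ∧
        ∀ a b : L, h.bracket (j a) (j b) = 0) :=
  and_congr_left fun square_zero => forall₂_congr fun a b => by
    rw [bracket_lieDerivative (square_zero a (g.d b))]

theorem d_bracket_of_mem_sub_one {p : ℤ} {x : M} (hx : x ∈ h.grading (p - 1)) (y : M) :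
    h.d (h.bracket x y) = h.bracket (h.d x) y - (-1 : K) ^ p • h.bracket x (h.d y) := by
  have sign : (-1 : K) ^ (p - 1) = -(-1 : K) ^ p := by
    rw [zpow_sub_one₀ (neg_ne_zero.mpr one_ne_zero), inv_neg_one, mul_neg_one]
  rw [h.bracket_leibniz _ x hx, sign, neg_smul, sub_eq_add_neg]

theorem lieDerivative_bracket_of_mem (hj : g.HasDegreeNegOne h.toCochainStruct j)
    (hbr : ∀ a b : L,
      j (g.bracket a b) = h.bracket (j a) (g.lieDerivative h.toCochainStruct j b))
    {p : ℤ} {a : L} (ha : a ∈ g.grading p) (b : L) :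
    g.lieDerivative h.toCochainStruct j (g.bracket a b) =
      h.bracket (g.lieDerivative h.toCochainStruct j a)
        (g.lieDerivative h.toCochainStruct j b) := by
  let l := g.lieDerivative h.toCochainStruct j
  have d_j : h.d (j (g.bracket a b)) =
      h.bracket (h.d (j a)) (l b) - (-1 : K) ^ p • h.bracket (j a) (h.d (l b)) := by
    rw [hbr, d_bracket_of_mem_sub_one (hj p a ha)]
  have j_d : j (g.d (g.bracket a b)) =
      h.bracket (j (g.d a)) (l b) + (-1 : K) ^ p • h.bracket (j a) (h.d (l b)) := by
    rw [g.bracket_leibniz p a ha, map_add, map_smul, hbr, hbr, lieDerivative_d]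
  calc l (g.bracket a b)
      = h.d (j (g.bracket a b)) + j (g.d (g.bracket a b)) := rfl
    _ = h.bracket (h.d (j a)) (l b) + h.bracket (j (g.d a)) (l b) := by rw [d_j, j_d]; abel
    _ = h.bracket (l a) (l b) := by rw [← LinearMap.add_apply, ← map_add]; rfl

theorem lieDerivative_bracket (hj : g.HasDegreeNegOne h.toCochainStruct j)
    (hbr : ∀ a b : L,
      j (g.bracket a b) = h.bracket (j a) (g.lieDerivative h.toCochainStruct j b))
    (a b : L) :
    g.lieDerivative h.toCochainStruct j (g.bracket a b) =
      h.bracket (g.lieDerivative h.toCochainStruct j a)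
        (g.lieDerivative h.toCochainStruct j b) := by
  let l := g.lieDerivative h.toCochainStruct j
  have linear_in_a : l ∘ₗ g.bracket.flip b = h.bracket.flip (l b) ∘ₗ l :=
    linearMap_ext_of_iSup_eq_top g.isInternal.submodule_iSup_eq_top fun _ _ ha =>
      lieDerivative_bracket_of_mem hj hbr ha b
  exact LinearMap.congr_fun linear_in_a a

/-- The Lie derivative as a morphism of DGLAs, for a degree `-1` map `j` satisfying
`j_{[a,b]} = [j_a, l_b]`. -/
def lieDerivativeHom (hj : g.HasDegreeNegOne h.toCochainStruct j)
    (hbr : ∀ a b : L,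
      j (g.bracket a b) = h.bracket (j a) (g.lieDerivative h.toCochainStruct j b)) :
    DGLAStructHom g h where
  toFun := g.lieDerivative h.toCochainStruct j
  map_grading := lieDerivative_mem_grading hj
  map_d := lieDerivative_d _ _ j
  map_bracket := lieDerivative_bracket hj hbr

end DGLAStruct

theorem CartanHomotopy.toFun_bracket_eq_bracket_lieDerivative {K : Type u} [Field K]
    {L : Type v} {M : Type w} [AddCommGroup L] [Module K L] [AddCommGroup M] [Module K M]
    {g : DGLAStruct K L} {h : DGLAStruct K M} (ci : CartanHomotopy g h) (a b : L) :
    ci.toFun (g.bracket a b) =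
      h.bracket (ci.toFun a) (g.lieDerivative h.toCochainStruct ci.toFun b) :=
  ((DGLAStruct.cartan_conditions_iff_lieDerivative g h ci.toFun).mp
    ⟨ci.cartan_bracket, ci.cartan_square⟩).1 a b

theorem lie_derivative_of_cartan_homotopy_general {K : Type u} [Field K]
    {L : Type v} {M : Type w} [AddCommGroup L] [Module K L] [AddCommGroup M] [Module K M]
    (g : DGLAStruct K L) (h : DGLAStruct K M) (i : L →ₗ[K] M)
    (hi : g.HasDegreeNegOne h.toCochainStruct i)
    (hbr : ∀ a b : L,
      i (g.bracket a b) = h.bracket (i a) (g.lieDerivative h.toCochainStruct i b)) :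
    (∃ F : DGLAStructHom g h, ∀ a : L, F.toFun a = g.lieDerivative h.toCochainStruct i a) ∧
    (∀ j : L →ₗ[K] M,
      ((∀ a b : L, j (g.bracket a b) = h.bracket (j a) (h.d (j b))) ∧
          ∀ a b : L, h.bracket (j a) (j b) = 0) ↔
        ((∀ a b : L, j (g.bracket a b) =
            h.bracket (j a) (g.lieDerivative h.toCochainStruct j b)) ∧
          ∀ a b : L, h.bracket (j a) (j b) = 0)) ∧
    g.IsHomotopy h.toCochainStruct i (g.lieDerivative h.toCochainStruct i) 0 :=
  ⟨⟨DGLAStruct.lieDerivativeHom hi hbr, fun _ => rfl⟩,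
    DGLAStruct.cartan_conditions_iff_lieDerivative g h,
    CochainStruct.isHomotopy_lieDerivative_zero hi⟩

/-- Let `L, M` be differential graded Lie algebras over a field `K`
of characteristic `0` and `i : L → M` a Cartan homotopy, i.e. a degree `−1` linear map
with `i_{[a,b]} = [i_a, d_M i_b]` and `[i_a, i_b] = 0` for all `a, b ∈ L`.  Then:
* the Lie derivative `l : L → M`, `l_a = d_M i_a + i_{d_L a}`, is a morphism of
  differential graded Lie algebras;
* for any degree `−1` graded linear map `j`, the Cartan homotopy conditions are
  equivalent to `j_{[a,b]} = [j_a, l_b]` (where `l_b = d_M j_b + j_{d_L b}`) together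
  with `[j_a, j_b] = 0`;
* as a morphism of complexes, `l` is homotopic to `0`, with homotopy `i`. -/
theorem lie_derivative_of_cartan_homotopy {K : Type u} [Field K] [CharZero K]
    {L M : Type u} [AddCommGroup L] [Module K L] [AddCommGroup M] [Module K M]
    (g : DGLAStruct K L) (h : DGLAStruct K M) (ci : CartanHomotopy g h) :
    (∃ F : DGLAStructHom g h,
      ∀ a : L, F.toFun a = h.d (ci.toFun a) + ci.toFun (g.d a)) ∧
    (∀ j : L →ₗ[K] M, (∀ i : ℤ, ∀ x ∈ g.grading i, j x ∈ h.grading (i - 1)) →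
      (((∀ a b : L, j (g.bracket a b) = h.bracket (j a) (h.d (j b))) ∧
          ∀ a b : L, h.bracket (j a) (j b) = 0) ↔
        ((∀ a b : L, j (g.bracket a b) = h.bracket (j a) (h.d (j b) + j (g.d b))) ∧
          ∀ a b : L, h.bracket (j a) (j b) = 0))) ∧
    (∃ H : L →ₗ[K] M, (∀ i : ℤ, ∀ x ∈ g.grading i, H x ∈ h.grading (i - 1)) ∧
      ∀ a : L, (h.d (ci.toFun a) + ci.toFun (g.d a)) - 0 = h.d (H a) + H (g.d a)) := by
  obtain ⟨hF, hiff, hH⟩ := lie_derivative_of_cartan_homotopy_general g h ci.toFun ci.map_grading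
    ci.toFun_bracket_eq_bracket_lieDerivative
  exact ⟨hF, fun j _ => hiff j, ci.toFun, hH.hasDegreeNegOne, hH.sub_eq⟩
end
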